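/- arXiv:1712.09674 — 3 statements merged into one kernel-verified Lean document; each statement's English description precedes it below -/
import Mathlib

section
/- Let d ≥ 1 and let f : ℝ^d × [0,1] → [0,∞) be Lipschitz with constant M ≥ 1 and f(x,0) = f(x,1) = 0 for all x. Set m' := √(M/d) and c' := 2√M·d. If r > 0, y ∈ ℝ^d, and u, u' : [0,∞)×ℝ^d → [0,1] are continuous on [0,∞)×ℝ^d, C^{1,2} on (0,∞)×ℝ^d, both solve w_t = Δw + f(x,w) classically for t > 0, and u(0,x) ≤ u'(0,x) for all x ∈ B_r(y), then u(t,y) ≤ u'(t,y) + c'·e^{−m'(r−c't)} for all t ≥ 0. -/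
open MeasureTheory Metric Set Filter
open scoped Topology

noncomputable section

/-- `d`-dimensional Euclidean space. -/
abbrev Euc (d : ℕ) : Type := EuclideanSpace ℝ (Fin d)

/-- The spatial Laplacian of `φ : ℝ^d → ℝ`. -/
def lap {d : ℕ} (φ : Euc d → ℝ) (x : Euc d) : ℝ :=
  ∑ i : Fin d,
    fderiv ℝ (fun y => fderiv ℝ φ y (EuclideanSpace.single i 1)) x (EuclideanSpace.single i 1)

/-- A classical solution `u : [0,∞)×ℝ^d → [0,1]` of `u_t = Δu + F(x,u)`:
continuous on `[0,∞)×ℝ^d`, `C^{1,2}` and solving the equation classically for `t > 0`. -/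
structure IsSolBare {d : ℕ} (F : Euc d → ℝ → ℝ) (u : ℝ → Euc d → ℝ) : Prop where
  mem_Icc : ∀ t x, 0 ≤ t → u t x ∈ Icc (0:ℝ) 1
  contOn : ContinuousOn (fun p : ℝ × Euc d => u p.1 p.2) (Ici 0 ×ˢ univ)
  spatial : ∀ t, 0 < t → ContDiff ℝ 2 (u t)
  eqn : ∀ t x, 0 < t → HasDerivAt (fun s => u s x) (lap (u t) x + F x (u t x)) t

/-!
Put `ψ(t,x) = exp((M + l²)t - lr/√d) ∑ᵢ 2cosh(l(xᵢ - yᵢ))`, so that `ψ_t = Δψ + Mψ`. Some coordinate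
of a point of the sphere `∂B_r(y)` is at distance at least `r/√d` from that of `y`, whence `1 ≤ ψ`
there. Therefore `w = u - u' - ψ` is nonpositive on the parabolic boundary of `B_r(y)`, and
`w_t ≤ Δw + Mw` wherever `w > 0`, because there `u > u'`. The maximum principle gives `w ≤ 0`, and
`ψ(t,y) = 2d exp((M + l²)t - lr/√d)` yields the claim for `l = √M`.
-/

section SecondDerivative

variable {E F : Type*} [NormedAddCommGroup E] [NormedSpace ℝ E] [NormedAddCommGroup F]
  [NormedSpace ℝ F]

lemma deriv_deriv_nonpos_of_isLocalMax {g : ℝ → ℝ} {a : ℝ} (hmax : IsLocalMax g a)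
    (hg : ContinuousAt g a) : deriv (deriv g) a ≤ 0 := by
  by_contra! hpos
  have hmin : IsLocalMin g a := isLocalMin_of_deriv_deriv_pos hpos hmax.deriv_eq_zero hg
  have hconst : g =ᶠ[𝓝 a] fun _ => g a := by
    filter_upwards [hmax, hmin] with s hle hge using le_antisymm hle hge
  have hzero : deriv (deriv g) a = 0 := by simpa using hconst.deriv.deriv_eq
  exact hpos.ne' hzero

lemma differentiableAt_fderiv_apply {φ : E → F} {x : E} (hφ : ContDiffAt ℝ 2 φ x) (v : E) :
    DifferentiableAt ℝ (fun y => fderiv ℝ φ y v) x :=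
  ((hφ.fderiv_right (m := 1) (by norm_num)).differentiableAt one_ne_zero).clm_apply
    (differentiableAt_const v)

lemma eventually_differentiableAt_of_contDiffAt {φ : E → F} {x : E} (hφ : ContDiffAt ℝ 1 φ x) :
    ∀ᶠ y in 𝓝 x, DifferentiableAt ℝ φ y :=
  (hφ.eventually (by simp)).mono fun _ hy => hy.differentiableAt one_ne_zero

lemma deriv_deriv_comp_line {φ : E → F} {x : E} (hφ : ContDiffAt ℝ 2 φ x) (v : E) :
    deriv (deriv fun s : ℝ => φ (x + s • v)) 0 = fderiv ℝ (fun y => fderiv ℝ φ y v) x v := by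
  have hline (s : ℝ) : HasDerivAt (fun s : ℝ => x + s • v) v s := by
    simpa using ((hasDerivAt_id s).smul_const v).const_add x
  have hline_tendsto : Tendsto (fun s : ℝ => x + s • v) (𝓝 0) (𝓝 x) := by
    simpa using (hline 0).continuousAt.tendsto
  have hfirst : (deriv fun s : ℝ => φ (x + s • v)) =ᶠ[𝓝 0]
      fun s => fderiv ℝ φ (x + s • v) v := by
    filter_upwards [hline_tendsto.eventually
      (eventually_differentiableAt_of_contDiffAt (hφ.of_le one_le_two))] with s hs
    exact (hs.hasFDerivAt.comp_hasDerivAt s (hline s)).deriv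
  have hsecond : HasFDerivAt (fun y => fderiv ℝ φ y v)
      (fderiv ℝ (fun y => fderiv ℝ φ y v) x) (x + (0 : ℝ) • v) := by
    simpa using (differentiableAt_fderiv_apply hφ v).hasFDerivAt
  rw [hfirst.deriv_eq]
  exact (hsecond.comp_hasDerivAt 0 (hline 0)).deriv

lemma fderiv_fderiv_apply_nonpos_of_isLocalMax {φ : E → ℝ} {x : E} (hφ : ContDiffAt ℝ 2 φ x)
    (hmax : IsLocalMax φ x) (v : E) : fderiv ℝ (fun y => fderiv ℝ φ y v) x v ≤ 0 := by
  have hline : ContinuousAt (fun s : ℝ => x + s • v) 0 := by fun_prop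
  have hx : x + (0 : ℝ) • v = x := by simp
  rw [← deriv_deriv_comp_line hφ v]
  refine deriv_deriv_nonpos_of_isLocalMax ?_ ?_
  · refine IsLocalMax.comp_continuous (g := fun s : ℝ => x + s • v) ?_ hline
    rwa [hx]
  · exact ContinuousAt.comp (f := fun s : ℝ => x + s • v) (by rw [hx]; exact hφ.continuousAt) hline

end SecondDerivative

section Laplacian

variable {d : ℕ} {φ ψ : Euc d → ℝ} {x : Euc d}

lemma lap_nonpos_of_isLocalMax (hφ : ContDiffAt ℝ 2 φ x) (hmax : IsLocalMax φ x) :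
    lap φ x ≤ 0 :=
  Finset.sum_nonpos fun _ _ => fderiv_fderiv_apply_nonpos_of_isLocalMax hφ hmax _

lemma lap_sub (hφ : ContDiffAt ℝ 2 φ x) (hψ : ContDiffAt ℝ 2 ψ x) :
    lap (φ - ψ) x = lap φ x - lap ψ x := by
  simp only [lap, ← Finset.sum_sub_distrib]
  refine Finset.sum_congr rfl fun i _ => ?_
  set e : Euc d := EuclideanSpace.single i 1
  have hfirst : (fun y => fderiv ℝ (φ - ψ) y e) =ᶠ[𝓝 x]
      (fun y => fderiv ℝ φ y e) - fun y => fderiv ℝ ψ y e := by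
    filter_upwards [eventually_differentiableAt_of_contDiffAt (hφ.of_le one_le_two),
      eventually_differentiableAt_of_contDiffAt (hψ.of_le one_le_two)] with y hφy hψy
    simp [fderiv_sub hφy hψy]
  rw [hfirst.fderiv_eq,
    fderiv_sub (differentiableAt_fderiv_apply hφ e) (differentiableAt_fderiv_apply hψ e)]
  rfl

lemma lap_const_smul (c : ℝ) (φ : Euc d → ℝ) (x : Euc d) : lap (c • φ) x = c * lap φ x := by
  have hfirst (v : Euc d) : (fun y => fderiv ℝ (c • φ) y v) = c • fun y => fderiv ℝ φ y v := by
    ext y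
    simp [fderiv_const_smul_field]
  simp only [lap, Finset.mul_sum]
  refine Finset.sum_congr rfl fun i _ => ?_
  rw [hfirst, fderiv_const_smul_field]
  rfl

end Laplacian

section MaximumPrinciple

lemma nonneg_of_hasDerivWithinAt_of_isMaxOn {g : ℝ → ℝ} {g' a t : ℝ} (hat : a < t)
    (hg : HasDerivWithinAt g g' (Icc a t) t) (hmax : IsMaxOn g (Icc a t) t) : 0 ≤ g' := by
  have hcone : a - t ∈ posTangentConeAt (Icc a t) t :=
    sub_mem_posTangentConeAt_of_segment_subset (by rw [segment_symm, segment_eq_Icc hat.le])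
  have hle : (a - t) * g' ≤ 0 := by
    simpa using hmax.localize.hasFDerivWithinAt_nonpos hg.hasFDerivWithinAt hcone
  exact nonneg_of_mul_nonpos_right hle (sub_neg.2 hat)

lemma mul_le_of_hasDerivWithinAt_of_isMaxOn_exp_mul {g : ℝ → ℝ} {g' a t k : ℝ} (hat : a < t)
    (hg : HasDerivWithinAt g g' (Icc a t) t)
    (hmax : IsMaxOn (fun s => Real.exp (-k * s) * g s) (Icc a t) t) : k * g t ≤ g' := by
  have hexp : HasDerivAt (fun s => Real.exp (-k * s)) (Real.exp (-k * t) * -k) t := by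
    simpa using ((hasDerivAt_id t).const_mul (-k)).exp
  have hnonneg := nonneg_of_hasDerivWithinAt_of_isMaxOn hat (hexp.hasDerivWithinAt.mul hg) hmax
  have hfactor : 0 ≤ Real.exp (-k * t) * (g' - k * g t) := by linarith
  linarith [nonneg_of_mul_nonneg_right hfactor (Real.exp_pos _)]

theorem nonpos_of_parabolic_subsolution {d : ℕ} {K : Set (Euc d)} {T C : ℝ}
    {w w' : ℝ → Euc d → ℝ} (hK : IsCompact K)
    (hcont : ContinuousOn (fun p : ℝ × Euc d => w p.1 p.2) (Icc 0 T ×ˢ K))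
    (hinit : ∀ x ∈ K, w 0 x ≤ 0)
    (hfrontier : ∀ t ∈ Icc 0 T, ∀ x ∈ frontier K, w t x ≤ 0)
    (hspace : ∀ t ∈ Ioc 0 T, ∀ x ∈ interior K, 0 < w t x → ContDiffAt ℝ 2 (w t) x)
    (htime : ∀ t ∈ Ioc 0 T, ∀ x ∈ interior K, 0 < w t x →
      HasDerivWithinAt (fun s => w s x) (w' t x) (Icc 0 t) t)
    (hsub : ∀ t ∈ Ioc 0 T, ∀ x ∈ interior K, 0 < w t x → w' t x ≤ lap (w t) x + C * w t x) :
    ∀ t ∈ Icc 0 T, ∀ x ∈ K, w t x ≤ 0 := by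
  intro t₀ ht₀ x₀ hx₀
  by_contra! hpos₀
  -- The exponential weight turns the growth rate `C` into the strictly damping rate `-1`.
  let v (p : ℝ × Euc d) : ℝ := Real.exp (-(C + 1) * p.1) * w p.1 p.2
  have hv : ContinuousOn v (Icc 0 T ×ˢ K) := ContinuousOn.mul (by fun_prop) hcont
  obtain ⟨⟨t, x⟩, ⟨ht, hx⟩, hmax⟩ :=
    (isCompact_Icc.prod hK).exists_isMaxOn ⟨(t₀, x₀), ht₀, hx₀⟩ hv
  have hpos : 0 < w t x := by
    have hv_pos : 0 < v (t, x) :=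
      (mul_pos (Real.exp_pos _) hpos₀).trans_le (hmax (a := (t₀, x₀)) ⟨ht₀, hx₀⟩)
    exact (mul_pos_iff_of_pos_left (Real.exp_pos _)).1 hv_pos
  have ht_pos : 0 < t := by
    refine lt_of_le_of_ne ht.1 ?_
    rintro rfl
    exact hpos.not_ge (hinit x hx)
  have htT : t ∈ Ioc 0 T := ⟨ht_pos, ht.2⟩
  have hx_int : x ∈ interior K := by
    by_contra hx_int
    exact hpos.not_ge (hfrontier t ht x ⟨subset_closure hx, hx_int⟩)
  have hspace_max : IsLocalMax (w t) x := by
    filter_upwards [mem_interior_iff_mem_nhds.1 hx_int] with z hz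
    exact le_of_mul_le_mul_left (hmax (a := (t, z)) ⟨ht, hz⟩) (Real.exp_pos _)
  have hlap : lap (w t) x ≤ 0 :=
    lap_nonpos_of_isLocalMax (hspace t htT x hx_int hpos) hspace_max
  have hgrowth : (C + 1) * w t x ≤ w' t x :=
    mul_le_of_hasDerivWithinAt_of_isMaxOn_exp_mul ht_pos (htime t htT x hx_int hpos)
      fun s hs => hmax (a := (s, x)) ⟨⟨hs.1, hs.2.trans ht.2⟩, hx⟩
  linarith [hsub t htT x hx_int hpos]

end MaximumPrinciple

section Barrier

variable {d : ℕ}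

/-- The profile `x ↦ ∑ᵢ 2cosh(l(xᵢ - yᵢ))`, an eigenfunction of the Laplacian for the eigenvalue
`l²` that grows exponentially away from its centre `y`. -/
def coshSum (l : ℝ) (y x : Euc d) : ℝ := ∑ i, 2 * Real.cosh (l * (x i - y i))

lemma contDiff_coshSum (l : ℝ) (y : Euc d) {n : WithTop ℕ∞} : ContDiff ℝ n (coshSum l y) := by
  unfold coshSum
  fun_prop

lemma coshSum_self (l : ℝ) (y : Euc d) : coshSum l y y = 2 * d := by
  simp [coshSum, mul_comm]

lemma coshSum_nonneg (l : ℝ) (y x : Euc d) : 0 ≤ coshSum l y x :=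
  Finset.sum_nonneg fun _ _ => by positivity

lemma hasFDerivAt_scaled_coord (l : ℝ) (y x : Euc d) (i : Fin d) :
    HasFDerivAt (fun z : Euc d => l * (z i - y i)) (l • EuclideanSpace.proj (𝕜 := ℝ) i) x :=
  (((EuclideanSpace.proj (𝕜 := ℝ) i).hasFDerivAt).sub_const (y i)).const_mul l

lemma fderiv_coshSum_single (l : ℝ) (y x : Euc d) (i : Fin d) :
    fderiv ℝ (coshSum l y) x (EuclideanSpace.single i 1) =
      2 * l * Real.sinh (l * (x i - y i)) := by
  have hderiv := HasFDerivAt.fun_sum (u := Finset.univ) fun j _ =>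
    ((hasFDerivAt_scaled_coord l y x j).cosh.const_mul 2)
  have hfderiv := HasFDerivAt.fderiv (f := coshSum l y) hderiv
  rw [hfderiv]
  simp only [sum_apply, smul_apply, PiLp.proj_apply, PiLp.single_apply, smul_eq_mul, mul_ite,
    mul_one, mul_zero, Finset.sum_ite_eq', Finset.mem_univ, ↓reduceIte]
  ring

lemma lap_coshSum (l : ℝ) (y x : Euc d) : lap (coshSum l y) x = l ^ 2 * coshSum l y x := by
  simp only [lap, fderiv_coshSum_single, coshSum, Finset.mul_sum]
  refine Finset.sum_congr rfl fun i _ => ?_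
  rw [((hasFDerivAt_scaled_coord l y x i).sinh.const_mul (2 * l)).fderiv]
  simp only [smul_apply, PiLp.proj_apply, PiLp.single_eq_same, smul_eq_mul, mul_one]
  ring

lemma exists_norm_le_sqrt_card_mul_abs {ι : Type*} [Fintype ι] [Nonempty ι]
    (z : EuclideanSpace ℝ ι) : ∃ i, ‖z‖ ≤ √(Fintype.card ι) * |z i| := by
  obtain ⟨i, -, hi⟩ := Finset.univ.exists_max_image (fun j => |z j|) Finset.univ_nonempty
  refine ⟨i, ?_⟩
  calc ‖z‖ = √(∑ j, |z j| ^ 2) := EuclideanSpace.norm_eq z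
    _ ≤ √(∑ _j : ι, |z i| ^ 2) := by
      gcongr √(∑ j, ?_ ^ 2) with j hj
      exact hi j hj
    _ = √(Fintype.card ι) * |z i| := by simp [Real.sqrt_sq_eq_abs]

lemma exp_mul_dist_div_sqrt_le_coshSum (hd : 1 ≤ d) (l : ℝ) (y x : Euc d) :
    Real.exp (l * dist x y / √d) ≤ coshSum l y x := by
  have : Nonempty (Fin d) := Fin.pos_iff_nonempty.1 hd
  obtain ⟨i, hi⟩ := exists_norm_le_sqrt_card_mul_abs (x - y)
  have hdist : dist x y / √d ≤ |x i - y i| := by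
    rw [div_le_iff₀' (by positivity), dist_eq_norm]
    simpa using hi
  have hexponent : l * dist x y / √d ≤ |l * (x i - y i)| := by
    rw [mul_div_assoc, abs_mul]
    gcongr
    exact le_abs_self l
  calc Real.exp (l * dist x y / √d) ≤ Real.exp |l * (x i - y i)| := by gcongr
    _ ≤ 2 * Real.cosh (l * (x i - y i)) := by
      rw [Real.cosh_eq, mul_div_cancel₀ _ two_ne_zero]
      exact Real.exp_abs_le _
    _ ≤ coshSum l y x :=
      Finset.single_le_sum (f := fun j => 2 * Real.cosh (l * (x j - y j)))
        (fun _ _ => by positivity) (Finset.mem_univ i)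

/-- A solution `ψ` of `ψ_t = Δψ + Mψ` that is at least `1` on the sphere of radius `r` about `y`
as long as the growth rate `M + l²` is nonnegative. -/
def coshBarrier (M l r : ℝ) (y : Euc d) (t : ℝ) (x : Euc d) : ℝ :=
  Real.exp ((M + l ^ 2) * t - l * r / √d) * coshSum l y x

variable (M l r : ℝ) (y : Euc d) (t : ℝ) (x : Euc d)

lemma contDiff_coshBarrier {n : WithTop ℕ∞} : ContDiff ℝ n (coshBarrier M l r y t) :=
  contDiff_const.mul (contDiff_coshSum l y)

lemma continuous_coshBarrier : Continuous fun p : ℝ × Euc d => coshBarrier M l r y p.1 p.2 := by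
  have := (contDiff_coshSum l y (n := 0)).continuous
  unfold coshBarrier
  fun_prop

lemma coshBarrier_nonneg : 0 ≤ coshBarrier M l r y t x :=
  mul_nonneg (Real.exp_pos _).le (coshSum_nonneg l y x)

lemma coshBarrier_center :
    coshBarrier M l r y t y = 2 * d * Real.exp ((M + l ^ 2) * t - l * r / √d) := by
  rw [coshBarrier, coshSum_self, mul_comm]

lemma lap_coshBarrier : lap (coshBarrier M l r y t) x = l ^ 2 * coshBarrier M l r y t x := by
  have hsmul : coshBarrier M l r y t =
      Real.exp ((M + l ^ 2) * t - l * r / √d) • coshSum l y := rfl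
  rw [hsmul, lap_const_smul, lap_coshSum, Pi.smul_apply, smul_eq_mul]
  ring

lemma hasDerivAt_coshBarrier :
    HasDerivAt (fun s => coshBarrier M l r y s x)
      (lap (coshBarrier M l r y t) x + M * coshBarrier M l r y t x) t := by
  have hrate : HasDerivAt (fun s => (M + l ^ 2) * s - l * r / √d) (M + l ^ 2) t := by
    simpa using ((hasDerivAt_id t).const_mul (M + l ^ 2)).sub_const (l * r / √d)
  refine (hrate.exp.mul_const (coshSum l y x)).congr_deriv ?_
  rw [lap_coshBarrier, coshBarrier]
  ring

variable {M l r y t x}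

lemma one_le_coshBarrier_of_mem_sphere (hd : 1 ≤ d) (hrate : 0 ≤ M + l ^ 2) (ht : 0 ≤ t)
    (hx : x ∈ sphere y r) : 1 ≤ coshBarrier M l r y t x := by
  calc 1 ≤ Real.exp ((M + l ^ 2) * t) := Real.one_le_exp (by positivity)
    _ = Real.exp ((M + l ^ 2) * t - l * r / √d) * Real.exp (l * r / √d) := by
      rw [← Real.exp_add, sub_add_cancel]
    _ ≤ coshBarrier M l r y t x := by
      rw [coshBarrier, ← mem_sphere.1 hx]
      gcongr
      exact exp_mul_dist_div_sqrt_le_coshSum hd l y x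

end Barrier

section Propagation

variable {d : ℕ} {f : Euc d → ℝ → ℝ} {M l r : ℝ} {y : Euc d} {u u' : ℝ → Euc d → ℝ}
  {t : ℝ} {x : Euc d}

lemma sub_sub_coshBarrier_nonpos_of_mem_sphere (hd : 1 ≤ d) (hrate : 0 ≤ M + l ^ 2)
    (hu : IsSolBare f u) (hu' : IsSolBare f u') (ht : 0 ≤ t) (hx : x ∈ sphere y r) :
    (u t - u' t - coshBarrier M l r y t) x ≤ 0 := by
  have hbarrier : 1 ≤ coshBarrier M l r y t x := one_le_coshBarrier_of_mem_sphere hd hrate ht hx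
  simp only [Pi.sub_apply]
  linarith [(hu.mem_Icc t x ht).2, (hu'.mem_Icc t x ht).1]

lemma sub_sub_coshBarrier_zero_nonpos (hd : 1 ≤ d) (hrate : 0 ≤ M + l ^ 2)
    (hu : IsSolBare f u) (hu' : IsSolBare f u') (h0 : ∀ x ∈ ball y r, u 0 x ≤ u' 0 x)
    (hx : x ∈ closedBall y r) : (u 0 - u' 0 - coshBarrier M l r y 0) x ≤ 0 := by
  rcases (mem_closedBall.1 hx).lt_or_eq with hball | hsphere
  · simp only [Pi.sub_apply]
    linarith [h0 x hball, coshBarrier_nonneg M l r y 0 x]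
  · exact sub_sub_coshBarrier_nonpos_of_mem_sphere hd hrate hu hu' le_rfl hsphere

lemma sub_sub_coshBarrier_subsolution
    (hlip : ∀ x, ∀ v ∈ Icc (0 : ℝ) 1, ∀ v' ∈ Icc (0 : ℝ) 1, v' ≤ v →
      f x v - f x v' ≤ M * (v - v'))
    (hu : IsSolBare f u) (hu' : IsSolBare f u') (ht : 0 < t)
    (hpos : 0 < (u t - u' t - coshBarrier M l r y t) x) :
    lap (u t) x + f x (u t x) - (lap (u' t) x + f x (u' t x)) -
        (lap (coshBarrier M l r y t) x + M * coshBarrier M l r y t x) ≤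
      lap (u t - u' t - coshBarrier M l r y t) x +
        M * (u t - u' t - coshBarrier M l r y t) x := by
  have hu_diff := (hu.spatial t ht).contDiffAt (x := x)
  have hu'_diff := (hu'.spatial t ht).contDiffAt (x := x)
  have hle : u' t x ≤ u t x := by
    simp only [Pi.sub_apply] at hpos
    linarith [coshBarrier_nonneg M l r y t x]
  have hreaction : f x (u t x) - f x (u' t x) ≤ M * (u t x - u' t x) :=
    hlip x _ (hu.mem_Icc t x ht.le) _ (hu'.mem_Icc t x ht.le) hle
  rw [lap_sub (φ := u t - u' t) (hu_diff.sub hu'_diff) (contDiff_coshBarrier M l r y t).contDiffAt,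
    lap_sub hu_diff hu'_diff]
  simp only [Pi.sub_apply]
  linarith

theorem le_add_coshBarrier (hd : 1 ≤ d) (hrate : 0 ≤ M + l ^ 2)
    (hlip : ∀ x, ∀ v ∈ Icc (0 : ℝ) 1, ∀ v' ∈ Icc (0 : ℝ) 1, v' ≤ v →
      f x v - f x v' ≤ M * (v - v'))
    (hu : IsSolBare f u) (hu' : IsSolBare f u') (h0 : ∀ x ∈ ball y r, u 0 x ≤ u' 0 x)
    (ht : 0 ≤ t) (hx : x ∈ closedBall y r) :
    u t x ≤ u' t x + coshBarrier M l r y t x := by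
  suffices hw : (u t - u' t - coshBarrier M l r y t) x ≤ 0 by
    simp only [Pi.sub_apply] at hw
    linarith
  refine nonpos_of_parabolic_subsolution (w := fun s => u s - u' s - coshBarrier M l r y s)
    (isCompact_closedBall y r) ?continuous
    (fun z hz => sub_sub_coshBarrier_zero_nonpos hd hrate hu hu' h0 hz)
    (fun s hs z hz => sub_sub_coshBarrier_nonpos_of_mem_sphere hd hrate hu hu' hs.1
      (frontier_closedBall_subset_sphere hz))
    (fun s hs z _ _ => (((hu.spatial s hs.1).sub (hu'.spatial s hs.1)).sub
      (contDiff_coshBarrier M l r y s)).contDiffAt)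
    (fun s hs z _ _ => (((hu.eqn s z hs.1).sub (hu'.eqn s z hs.1)).sub
      (hasDerivAt_coshBarrier M l r y s z)).hasDerivWithinAt)
    (fun s hs z _ hpos => sub_sub_coshBarrier_subsolution hlip hu hu' hs.1 hpos)
    t ⟨ht, le_rfl⟩ x hx
  have hdomain : Icc 0 t ×ˢ closedBall y r ⊆ Ici 0 ×ˢ univ :=
    prod_mono Icc_subset_Ici_self (subset_univ _)
  exact ((hu.contOn.mono hdomain).sub (hu'.contOn.mono hdomain)).sub
    (continuous_coshBarrier M l r y).continuousOn

lemma two_mul_exp_le_propagation_bound (hd : 1 ≤ d) (hM : 1 ≤ M) (ht : 0 ≤ t) :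
    2 * d * Real.exp ((M + √M ^ 2) * t - √M * r / √d) ≤
      (2 * √M * d) * Real.exp (-(√(M / d) * (r - (2 * √M * d) * t))) := by
  have hd_pos : (0 : ℝ) < d := by exact_mod_cast hd
  have hM_sq : √M ^ 2 = M := Real.sq_sqrt (by linarith)
  have hsqrt_d : 1 ≤ √(d : ℝ) := Real.one_le_sqrt.2 (by exact_mod_cast hd)
  have hspeed : √M / √d * (2 * √M * d * t) = 2 * M * t * √d := by
    nth_rw 3 [← hM_sq]
    field_simp
    rw [Real.sq_sqrt hd_pos.le]
  have hexponent : (M + √M ^ 2) * t - √M * r / √d ≤ -(√(M / d) * (r - (2 * √M * d) * t)) := by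
    rw [Real.sqrt_div (by linarith), mul_sub, hspeed, hM_sq, div_mul_eq_mul_div]
    linarith [le_mul_of_one_le_right (by positivity : 0 ≤ 2 * M * t) hsqrt_d]
  have hfactor : 2 * (d : ℝ) ≤ 2 * √M * d := by
    gcongr
    linarith [Real.one_le_sqrt.2 hM]
  gcongr

end Propagation

theorem stmt9_general {d : ℕ} (hd1 : 1 ≤ d) (f : Euc d → ℝ → ℝ) (M : ℝ) (hM : 1 ≤ M)
    (hlip : ∀ x, ∀ v ∈ Icc (0 : ℝ) 1, ∀ v' ∈ Icc (0 : ℝ) 1, v' ≤ v →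
      f x v - f x v' ≤ M * (v - v'))
    (r : ℝ) (hr : 0 < r) (y : Euc d) (u u' : ℝ → Euc d → ℝ)
    (hu : IsSolBare f u) (hu' : IsSolBare f u') (h0 : ∀ x ∈ ball y r, u 0 x ≤ u' 0 x)
    (t : ℝ) (ht : 0 ≤ t) :
    u t y ≤ u' t y + (2 * √M * d) * Real.exp (-(√(M / d) * (r - (2 * √M * d) * t))) :=
  calc u t y ≤ u' t y + coshBarrier M √M r y t y :=
        le_add_coshBarrier hd1 (by positivity) hlip hu hu' h0 ht (mem_closedBall_self hr.le)
    _ ≤ u' t y + (2 * √M * d) * Real.exp (-(√(M / d) * (r - (2 * √M * d) * t))) := by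
        rw [coshBarrier_center]
        gcongr _ + ?_
        exact two_mul_exp_le_propagation_bound hd1 hM ht

/-- Lemma 2.2: finite speed of propagation of perturbations, with explicit
constants `m' = √(M/d)` and `c' = 2√M·d`. -/
theorem stmt9 {d : ℕ} (hd1 : 1 ≤ d)
    (f : Euc d → ℝ → ℝ) (M : ℝ) (hM : 1 ≤ M)
    (hlip : ∀ x x' : Euc d, ∀ v v' : ℝ, v ∈ Icc (0:ℝ) 1 → v' ∈ Icc (0:ℝ) 1 →
      |f x v - f x' v'| ≤ M * (‖x - x'‖ + |v - v'|))
    (hnonneg : ∀ x : Euc d, ∀ v ∈ Icc (0:ℝ) 1, 0 ≤ f x v)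
    (hf0 : ∀ x, f x 0 = 0) (hf1 : ∀ x, f x 1 = 0)
    (r : ℝ) (hr : 0 < r) (y : Euc d)
    (u u' : ℝ → Euc d → ℝ) (hu : IsSolBare f u) (hu' : IsSolBare f u')
    (h0 : ∀ x ∈ ball y r, u 0 x ≤ u' 0 x) :
    ∀ t : ℝ, 0 ≤ t →
      u t y ≤ u' t y + (2 * Real.sqrt M * d) *
        Real.exp (-(Real.sqrt (M / d) * (r - (2 * Real.sqrt M * d) * t))) := by
  refine stmt9_general hd1 f M hM (fun x v hv v' hv' hle => ?_) r hr y u u' hu hu' h0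
  simpa [abs_of_nonneg (sub_nonneg.2 hle)] using (le_abs_self _).trans (hlip x x v v' hv hv')
end
end

section
/- Let d ≥ 1, θ₀ ∈ (0,1), and let f₀ : [0,1] → [0,∞) be Lipschitz with f₀(u) = 0 for u ∈ [0,θ₀] ∪ {1} and f₀(u) > 0 for u ∈ (θ₀,1). Then for every β ∈ (θ₀,1) there exists a compactly supported, radially symmetric, continuous function v : ℝ^d → [0,∞) with max v = v(0) = β which satisfies Δv + f₀(v) ≥ 0 in the sense of distributions: for every nonnegative smooth compactly supported φ : ℝ^d → ℝ, ∫_{ℝ^d} v(x)·Δφ(x) dx + ∫_{ℝ^d} f₀(v(x))·φ(x) dx ≥ 0. -/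
open MeasureTheory Metric Set Filter
open scoped Topology NNReal

noncomputable section

/-!
Saturating the `C²` bump `K (1 - |x|²)₊³`, which is subharmonic where it lies below `β` once `K` is
large, by a smooth function equal to the identity below `a` and to `β` above `β`, gives a radial
bump `V` of height `β` with `ΔV ≥ 0` wherever `V < a`, while `ΔV` is bounded below as `V` is `C²`
with compact support. The dilation `v x = V (ρ x)` multiplies the Laplacian by `ρ²`, so for small
`ρ` the negative part of `Δv` is absorbed by `f(v)`, which is bounded away from zero on `[a, β]`.
-/

section RealFunctions

lemma hasDerivAt_max_zero_pow (n : ℕ) (t : ℝ) :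
    HasDerivAt (fun t : ℝ => max t 0 ^ (n + 2)) ((n + 2) * max t 0 ^ (n + 1)) t := by
  rcases lt_trichotomy t 0 with ht | rfl | ht
  · have hloc : (fun t : ℝ => max t 0 ^ (n + 2)) =ᶠ[𝓝 t] fun _ => 0 := by
      filter_upwards [gt_mem_nhds ht] with s hs
      simp [max_eq_right hs.le]
    simpa [max_eq_right ht.le] using (hasDerivAt_const t (0 : ℝ)).congr_of_eventuallyEq hloc
  · have hbound : (fun t : ℝ => max t 0 ^ (n + 2)) =O[𝓝 0] fun t => t ^ (n + 2) :=
      .of_bound 1 <| .of_forall fun t => by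
        simp only [one_mul, norm_pow, Real.norm_eq_abs, abs_of_nonneg (le_max_right t 0)]
        exact pow_le_pow_left₀ (le_max_right t 0) (max_le (le_abs_self t) (abs_nonneg t)) _
    have hsmall : (fun t : ℝ => t ^ (n + 2)) =o[𝓝 0] fun t => t := by
      simpa using Asymptotics.isLittleO_pow_pow (𝕜 := ℝ) (show 1 < n + 2 by lia)
    simpa [hasDerivAt_iff_isLittleO] using hbound.trans_isLittleO hsmall
  · have hloc : (fun t : ℝ => max t 0 ^ (n + 2)) =ᶠ[𝓝 t] fun t => t ^ (n + 2) := by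
      filter_upwards [lt_mem_nhds ht] with s hs
      simp [max_eq_left hs.le]
    simpa [max_eq_left ht.le] using (hasDerivAt_pow (n + 2) t).congr_of_eventuallyEq hloc

lemma contDiff_max_zero_pow (n : ℕ) : ContDiff ℝ n (fun t : ℝ => max t 0 ^ (n + 1)) := by
  induction n with
  | zero => exact contDiff_zero.2 (by fun_prop)
  | succ n ih =>
    have hderiv : deriv (fun t : ℝ => max t 0 ^ (n + 2)) =
        fun t => (n + 2 : ℝ) * max t 0 ^ (n + 1) :=
      funext fun t => (hasDerivAt_max_zero_pow n t).deriv
    refine (contDiff_succ_iff_deriv (n := n)).2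
      ⟨fun t => (hasDerivAt_max_zero_pow n t).differentiableAt, by simp, ?_⟩
    rw [hderiv]
    exact contDiff_const.mul ih

/-- A smooth cap at height `β`: the identity below `a`, constant `β` above `β`, and in between the
interpolation of the two by `Real.smoothTransition`. -/
def saturate (a β y : ℝ) : ℝ :=
  y + (β - y) * Real.smoothTransition ((y - a) / (β - a))

variable {a β y : ℝ}

lemma contDiff_saturate {n : ℕ∞} : ContDiff ℝ n (saturate a β) :=
  contDiff_id.add ((contDiff_const.sub contDiff_id).mul
    (Real.smoothTransition.contDiff.comp ((contDiff_id.sub contDiff_const).div_const _)))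

lemma saturate_of_le (hab : a < β) (hy : y ≤ a) : saturate a β y = y := by
  have hσ : Real.smoothTransition ((y - a) / (β - a)) = 0 :=
    Real.smoothTransition.zero_of_nonpos
      (div_nonpos_of_nonpos_of_nonneg (sub_nonpos.2 hy) (sub_pos.2 hab).le)
  simp [saturate, hσ]

lemma saturate_of_ge (hab : a < β) (hy : β ≤ y) : saturate a β y = β := by
  have hσ : Real.smoothTransition ((y - a) / (β - a)) = 1 :=
    Real.smoothTransition.one_of_one_le ((one_le_div (sub_pos.2 hab)).2 (by linarith))
  simp [saturate, hσ]

lemma saturate_le (hab : a < β) (y : ℝ) : saturate a β y ≤ β := by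
  rcases le_total β y with hy | hy
  · exact (saturate_of_ge hab hy).le
  · have hle := mul_le_of_le_one_right (sub_nonneg.2 hy)
      (Real.smoothTransition.le_one ((y - a) / (β - a)))
    unfold saturate
    linarith

lemma min_le_saturate (hab : a < β) (y : ℝ) : min y β ≤ saturate a β y := by
  rcases le_total β y with hy | hy
  · exact (min_le_right _ _).trans_eq (saturate_of_ge hab hy).symm
  · exact (min_le_left _ _).trans (le_add_of_nonneg_right
      (mul_nonneg (sub_nonneg.2 hy) (Real.smoothTransition.nonneg _)))

lemma exists_Icc_forall_lt_of_continuousWithinAt {f : ℝ → ℝ} {l c : ℝ} (hl : l < β)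
    (hf : ContinuousWithinAt f (Icc l β) β) (hc : c < f β) :
    ∃ a ∈ Ioo l β, ∀ u ∈ Icc a β, c < f u := by
  have hnear : ∀ᶠ u in 𝓝[≤] β, c < f u := by
    rw [← nhdsWithin_Icc_eq_nhdsLE hl]
    exact hf.eventually_const_lt hc
  obtain ⟨m, hm, hsub⟩ := (mem_nhdsLE_iff_exists_mem_Ico_Ioc_subset hl).1 hnear
  obtain ⟨a, hma, haβ⟩ := exists_between hm.2
  exact ⟨a, ⟨hm.1.trans_lt hma, haβ⟩, fun u hu => hsub ⟨hma.trans_le hu.1, hu.2⟩⟩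

end RealFunctions

section IntegrationByParts

variable {E : Type*} [NormedAddCommGroup E] [NormedSpace ℝ E] [FiniteDimensional ℝ E]
  [MeasurableSpace E] [BorelSpace E] {μ : Measure E} [μ.IsAddHaarMeasure]

lemma integral_mul_fderiv_eq_neg_of_hasCompactSupport {u φ : E → ℝ} (hu : ContDiff ℝ 1 u)
    (hφ : ContDiff ℝ 1 φ) (hφs : HasCompactSupport φ) (v : E) :
    ∫ x, u x * fderiv ℝ φ x v ∂μ = -∫ x, fderiv ℝ u x v * φ x ∂μ := by
  have hu' : Continuous fun x => fderiv ℝ u x v := (hu.continuous_fderiv one_ne_zero).clm_apply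
    continuous_const
  have hφ' : Continuous fun x => fderiv ℝ φ x v := (hφ.continuous_fderiv one_ne_zero).clm_apply
    continuous_const
  exact integral_mul_fderiv_eq_neg_fderiv_mul_of_integrable
    ((hu'.mul hφ.continuous).integrable_of_hasCompactSupport hφs.mul_left)
    ((hu.continuous.mul hφ').integrable_of_hasCompactSupport (hφs.fderiv_apply (𝕜 := ℝ) v).mul_left)
    ((hu.continuous.mul hφ.continuous).integrable_of_hasCompactSupport hφs.mul_left)
    (fun x _ => hu.differentiable one_ne_zero x) (fun x _ => hφ.differentiable one_ne_zero x)

end IntegrationByParts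

section RadialDerivatives

variable {E : Type*} [NormedAddCommGroup E] [InnerProductSpace ℝ E]

lemma fderiv_comp_norm_sq_apply {q : ℝ → ℝ} (hq : Differentiable ℝ q) (x v : E) :
    fderiv ℝ (fun y : E => q (‖y‖ ^ 2)) x v = 2 * inner ℝ x v * deriv q (‖x‖ ^ 2) := by
  have h : HasFDerivAt (fun y : E => q (‖y‖ ^ 2)) _ x :=
    (hq (‖x‖ ^ 2)).hasDerivAt.comp_hasFDerivAt x (hasStrictFDerivAt_norm_sq x).hasFDerivAt
  rw [h.fderiv]
  simp only [smul_apply, innerSL_apply_apply, nsmul_eq_mul, smul_eq_mul]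
  push_cast
  ring

lemma fderiv_fderiv_comp_norm_sq_apply {q : ℝ → ℝ} (hq : ContDiff ℝ 2 q) (x v : E) :
    fderiv ℝ (fun y => fderiv ℝ (fun z : E => q (‖z‖ ^ 2)) y v) x v =
      4 * inner ℝ x v ^ 2 * deriv (deriv q) (‖x‖ ^ 2) + 2 * ‖v‖ ^ 2 * deriv q (‖x‖ ^ 2) := by
  have hq' : Differentiable ℝ (deriv q) :=
    ((contDiff_succ_iff_deriv (n := 1)).1 hq).2.2.differentiable one_ne_zero
  have hinner : HasFDerivAt (fun y : E => 2 * inner ℝ y v) ((2 : ℝ) • innerSL ℝ v) x := by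
    simpa [real_inner_comm] using ((innerSL ℝ v).hasFDerivAt (x := x)).const_mul 2
  have hradial : DifferentiableAt ℝ (fun y : E => deriv q (‖y‖ ^ 2)) x :=
    (hq' _).comp x (hasStrictFDerivAt_norm_sq x).differentiableAt
  simp only [fderiv_comp_norm_sq_apply (hq.differentiable two_ne_zero)]
  rw [fderiv_fun_mul hinner.differentiableAt hradial, hinner.fderiv]
  simp only [add_apply, smul_apply, fderiv_comp_norm_sq_apply hq', innerSL_apply_apply,
    real_inner_self_eq_norm_sq, smul_eq_mul]
  ring

end RadialDerivatives

section LaplacianCalculus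

open Laplacian InnerProductSpace Module

variable {E : Type*} [NormedAddCommGroup E] [InnerProductSpace ℝ E] [FiniteDimensional ℝ E]
  {F : Type*} [NormedAddCommGroup F] [NormedSpace ℝ F]

lemma laplacian_eq_sum_fderiv_fderiv {ι : Type*} [Fintype ι] (b : OrthonormalBasis ι ℝ E)
    {u : E → F} (hu : ContDiff ℝ 2 u) :
    Δ u = fun x => ∑ i, fderiv ℝ (fun y => fderiv ℝ u y (b i)) x (b i) := by
  have hdiff : Differentiable ℝ (fderiv ℝ u) :=
    (hu.fderiv_right (m := 1) le_rfl).differentiable one_ne_zero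
  ext x
  rw [laplacian_eq_iteratedFDeriv_orthonormalBasis u b]
  refine Finset.sum_congr rfl fun i _ => ?_
  simp [iteratedFDeriv_two_apply, fderiv_clm_apply (hdiff x) (differentiableAt_const (b i))]

lemma lap_eq_laplacian {d : ℕ} {φ : Euc d → ℝ} (hφ : ContDiff ℝ 2 φ) : lap φ = Δ φ := by
  ext x
  simp [lap, laplacian_eq_sum_fderiv_fderiv (EuclideanSpace.basisFun (Fin d) ℝ) hφ]

lemma continuous_laplacian {u : E → F} (hu : ContDiff ℝ 2 u) : Continuous (Δ u) := by
  rw [laplacian_eq_iteratedFDeriv_stdOrthonormalBasis]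
  exact continuous_finsetSum _ fun i _ =>
    (hu.continuous_iteratedFDeriv (m := 2) le_rfl).eval_const _

lemma hasCompactSupport_laplacian {u : E → F} (hu : HasCompactSupport u) :
    HasCompactSupport (Δ u) := by
  refine (hu.iteratedFDeriv (𝕜 := ℝ) 2).mono fun x hx hzero => hx ?_
  simp [laplacian_eq_iteratedFDeriv_stdOrthonormalBasis, hzero]

lemma laplacian_comp_const_smul (ρ : ℝ) {u : E → F} (hu : ContDiff ℝ 2 u) (x : E) :
    Δ (fun y => u (ρ • y)) x = ρ ^ 2 • Δ u (ρ • x) := by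
  simp [laplacian_eq_iteratedFDeriv_stdOrthonormalBasis, iteratedFDeriv_comp_const_smul ρ hu,
    Finset.smul_sum]

lemma laplacian_comp_norm_sq {q : ℝ → ℝ} (hq : ContDiff ℝ 2 q) (x : E) :
    Δ (fun y : E => q (‖y‖ ^ 2)) x =
      4 * ‖x‖ ^ 2 * deriv (deriv q) (‖x‖ ^ 2) + 2 * finrank ℝ E * deriv q (‖x‖ ^ 2) := by
  have hu : ContDiff ℝ 2 fun y : E => q (‖y‖ ^ 2) := hq.comp (contDiff_norm_sq ℝ)
  simp only [laplacian_eq_sum_fderiv_fderiv (stdOrthonormalBasis ℝ E) hu,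
    fderiv_fderiv_comp_norm_sq_apply hq, OrthonormalBasis.norm_eq_one, Finset.sum_add_distrib,
    ← Finset.sum_mul, ← Finset.mul_sum, OrthonormalBasis.sum_sq_inner_left]
  simp only [one_pow, mul_one, Finset.sum_const, Finset.card_univ, Fintype.card_fin, nsmul_eq_mul]
  ring

variable [MeasurableSpace E] [BorelSpace E] {μ : Measure E} [μ.IsAddHaarMeasure]

lemma integral_mul_laplacian_comm {u φ : E → ℝ} (hu : ContDiff ℝ 2 u) (hφ : ContDiff ℝ 2 φ)
    (hφs : HasCompactSupport φ) :
    ∫ x, u x * Δ φ x ∂μ = ∫ x, Δ u x * φ x ∂μ := by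
  let b := stdOrthonormalBasis ℝ E
  have hpartial {w : E → ℝ} (hw : ContDiff ℝ 2 w) (i) : ContDiff ℝ 1 fun x => fderiv ℝ w x (b i) :=
    (hw.fderiv_right le_rfl).clm_apply contDiff_const
  have hsecond {w : E → ℝ} (hw : ContDiff ℝ 2 w) (i) :
      Continuous fun x => fderiv ℝ (fun y => fderiv ℝ w y (b i)) x (b i) :=
    ((hpartial hw i).continuous_fderiv one_ne_zero).clm_apply continuous_const
  have hφs' (i) : HasCompactSupport fun x => fderiv ℝ φ x (b i) := hφs.fderiv_apply (𝕜 := ℝ) (b i)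
  simp only [laplacian_eq_sum_fderiv_fderiv b hu, laplacian_eq_sum_fderiv_fderiv b hφ,
    Finset.mul_sum, Finset.sum_mul]
  rw [integral_finsetSum, integral_finsetSum]
  · refine Finset.sum_congr rfl fun i _ => ?_
    rw [integral_mul_fderiv_eq_neg_of_hasCompactSupport (hu.of_le one_le_two) (hpartial hφ i)
        (hφs' i), integral_mul_fderiv_eq_neg_of_hasCompactSupport (hpartial hu i)
        (hφ.of_le one_le_two) hφs, neg_neg]
  · exact fun i _ =>
      ((hsecond hu i).mul hφ.continuous).integrable_of_hasCompactSupport hφs.mul_left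
  · exact fun i _ => (hu.continuous.mul (hsecond hφ i)).integrable_of_hasCompactSupport
      ((hφs' i).fderiv_apply (𝕜 := ℝ) (b i)).mul_left

lemma integral_mul_laplacian_add_integral_mul_nonneg {u g φ : E → ℝ} (hu : ContDiff ℝ 2 u)
    (hg : Continuous g) (hsub : ∀ x, 0 ≤ Δ u x + g x) (hφ : ContDiff ℝ 2 φ)
    (hφs : HasCompactSupport φ) (hφ0 : ∀ x, 0 ≤ φ x) :
    0 ≤ (∫ x, u x * Δ φ x ∂μ) + ∫ x, g x * φ x ∂μ := by
  rw [integral_mul_laplacian_comm hu hφ hφs, ← integral_add]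
  · refine integral_nonneg fun x => ?_
    rw [← add_mul]
    exact mul_nonneg (hsub x) (hφ0 x)
  · exact ((continuous_laplacian hu).mul hφ.continuous).integrable_of_hasCompactSupport hφs.mul_left
  · exact (hg.mul hφ.continuous).integrable_of_hasCompactSupport hφs.mul_left

end LaplacianCalculus

section RadialBumps

open Laplacian InnerProductSpace Module

variable {E : Type*} [NormedAddCommGroup E]

/-- The `C²` bump `K (1 - |x|²)₊³` supported in the closed unit ball. -/
def cubicBump (K : ℝ) (x : E) : ℝ :=
  K * max (1 - ‖x‖ ^ 2) 0 ^ 3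

lemma cubicBump_nonneg {K : ℝ} (hK : 0 ≤ K) (x : E) : 0 ≤ cubicBump K x :=
  mul_nonneg hK (pow_nonneg (le_max_right _ _) 3)

lemma cubicBump_zero (K : ℝ) : cubicBump K (0 : E) = K := by
  simp [cubicBump]

lemma cubicBump_eq_zero (K : ℝ) {x : E} (hx : 1 ≤ ‖x‖) : cubicBump K x = 0 := by
  have hsq : 1 - ‖x‖ ^ 2 ≤ 0 := sub_nonpos.2 (one_le_pow₀ hx)
  simp [cubicBump, max_eq_right hsq]

/-- A compactly supported, radially symmetric, continuous function with values in `[0, β]` which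
attains its maximum `β` at the origin. -/
structure IsRadialBump (β : ℝ) (v : E → ℝ) : Prop where
  hasCompactSupport : HasCompactSupport v
  continuous : Continuous v
  radial : ∀ x y, ‖x‖ = ‖y‖ → v x = v y
  nonneg : ∀ x, 0 ≤ v x
  apply_zero : v 0 = β
  le : ∀ x, v x ≤ β

lemma IsRadialBump.comp_const_smul [NormedSpace ℝ E] {β ρ : ℝ} {v : E → ℝ} (hv : IsRadialBump β v)
    (hρ : ρ ≠ 0) : IsRadialBump β fun x => v (ρ • x) where
  hasCompactSupport := hv.hasCompactSupport.comp_smul hρ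
  continuous := hv.continuous.comp (continuous_const_smul ρ)
  radial x y hxy := hv.radial _ _ (by rw [norm_smul, norm_smul, hxy])
  nonneg x := hv.nonneg _
  apply_zero := by rw [smul_zero, hv.apply_zero]
  le x := hv.le _

variable [InnerProductSpace ℝ E]

lemma contDiff_cubicBump (K : ℝ) : ContDiff ℝ 2 (cubicBump K : E → ℝ) :=
  contDiff_const.mul ((contDiff_max_zero_pow 2).comp (contDiff_const.sub (contDiff_norm_sq ℝ)))

variable [FiniteDimensional ℝ E]

lemma laplacian_cubicBump (K : ℝ) (x : E) :
    Δ (cubicBump K : E → ℝ) x = 6 * K * max (1 - ‖x‖ ^ 2) 0 *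
      (4 * ‖x‖ ^ 2 - finrank ℝ E * max (1 - ‖x‖ ^ 2) 0) := by
  have hpow (n : ℕ) (s : ℝ) : HasDerivAt (fun s : ℝ => max (1 - s) 0 ^ (n + 2))
      (-((n + 2) * max (1 - s) 0 ^ (n + 1))) s :=
    (hasDerivAt_max_zero_pow n (1 - s)).comp_const_sub 1 s
  have hderiv : deriv (fun s : ℝ => K * max (1 - s) 0 ^ 3) = fun s => -3 * K * max (1 - s) 0 ^ 2 :=
    funext fun s => by
      rw [((hpow 1 s).const_mul K).deriv]
      push_cast
      ring
  have hderiv₂ (s : ℝ) : deriv (fun s : ℝ => -3 * K * max (1 - s) 0 ^ 2) s =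
      6 * K * max (1 - s) 0 := by
    rw [((hpow 0 s).const_mul (-3 * K)).deriv]
    push_cast
    ring
  have hprofile : ContDiff ℝ 2 fun s : ℝ => K * max (1 - s) 0 ^ 3 :=
    contDiff_const.mul ((contDiff_max_zero_pow 2).comp (contDiff_const.sub contDiff_id))
  have h := laplacian_comp_norm_sq hprofile x
  rw [hderiv, hderiv₂] at h
  refine h.trans ?_
  ring

lemma laplacian_cubicBump_nonneg {K : ℝ} (hK : 0 < K) {x : E}
    (hx : cubicBump K x ≤ K * (4 / (finrank ℝ E + 4)) ^ 3) : 0 ≤ Δ (cubicBump K : E → ℝ) x := by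
  rw [laplacian_cubicBump]
  rcases le_total (1 - ‖x‖ ^ 2) 0 with hout | hin
  · simp [max_eq_right hout]
  · have hcube := le_of_mul_le_mul_left hx hK
    have hbase : max (1 - ‖x‖ ^ 2) 0 ≤ 4 / (finrank ℝ E + 4 : ℝ) :=
      le_of_pow_le_pow_left₀ three_ne_zero (by positivity) hcube
    rw [max_eq_left hin] at hbase ⊢
    rw [le_div_iff₀ (by positivity)] at hbase
    exact mul_nonneg (by positivity) (by linarith)

lemma exists_isRadialBump_laplacian_nonneg {a β : ℝ} (ha : 0 < a) (hab : a < β) :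
    ∃ v : E → ℝ, IsRadialBump β v ∧ ContDiff ℝ 2 v ∧ ∀ x, v x < a → 0 ≤ Δ v x := by
  -- `K` is chosen so that `cubicBump K` is subharmonic where it is at most `β`.
  set γ : ℝ := 4 / (finrank ℝ E + 4) with hγ
  have hγ0 : 0 < γ := by positivity
  have hγ1 : γ ≤ 1 := (div_le_one (by positivity)).2 (by simp)
  set K : ℝ := β / γ ^ 3
  have hβ : 0 < β := ha.trans hab
  have hK : 0 < K := by positivity
  have hKγ : K * γ ^ 3 = β := div_mul_cancel₀ _ (by positivity)
  have hβK : β ≤ K := le_div_self hβ.le (by positivity) (pow_le_one₀ hγ0.le hγ1)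
  have hsmooth : ContDiff ℝ 2 fun x : E => saturate a β (cubicBump K x) :=
    (contDiff_saturate (n := 2)).comp (contDiff_cubicBump K)
  refine ⟨fun x => saturate a β (cubicBump K x), ⟨?_, hsmooth.continuous, ?_, ?_, ?_, ?_⟩,
    hsmooth, ?_⟩
  · refine .intro (isCompact_closedBall (0 : E) 1) fun x hx => ?_
    rw [mem_closedBall_zero_iff, not_le] at hx
    rw [cubicBump_eq_zero K hx.le, saturate_of_le hab ha.le]
  · intro x y hxy
    simp only [cubicBump, hxy]
  · exact fun x => (le_min (cubicBump_nonneg hK.le x) hβ.le).trans (min_le_saturate hab _)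
  · rw [cubicBump_zero, saturate_of_ge hab hβK]
  · exact fun x => saturate_le hab _
  · intro x hx
    have hlow : cubicBump K x < a :=
      (min_lt_iff.1 ((min_le_saturate hab _).trans_lt hx)).resolve_right hab.not_gt
    have hloc : (fun y : E => saturate a β (cubicBump K y)) =ᶠ[𝓝 x] cubicBump K := by
      filter_upwards [(contDiff_cubicBump K).continuous.tendsto x (gt_mem_nhds hlow)] with y hy
      exact saturate_of_le hab (le_of_lt hy)
    rw [(laplacian_congr_nhds hloc).eq_of_nhds]
    exact laplacian_cubicBump_nonneg hK (by rw [← hγ, hKγ]; exact (hlow.trans hab).le)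

lemma exists_forall_neg_le_laplacian_comp_const_smul {u : E → ℝ} (hu : ContDiff ℝ 2 u)
    (hus : HasCompactSupport u) {c : ℝ} (hc : 0 < c) :
    ∃ ρ : ℝ, 0 < ρ ∧ ∀ x, -c ≤ Δ (fun y => u (ρ • y)) x := by
  obtain ⟨C, hC⟩ := (hasCompactSupport_laplacian hus).exists_bound_of_continuous
    (continuous_laplacian hu)
  have hC0 : 0 ≤ C := (norm_nonneg _).trans (hC 0)
  refine ⟨√(c / (C + 1)), by positivity, fun x => ?_⟩
  rw [laplacian_comp_const_smul _ hu, Real.sq_sqrt (by positivity), smul_eq_mul]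
  have hlower : -(C + 1) ≤ Δ u (√(c / (C + 1)) • x) := by
    linarith [(abs_le.1 (hC (√(c / (C + 1)) • x))).1]
  calc -c = c / (C + 1) * -(C + 1) := by field_simp
    _ ≤ _ := by gcongr

lemma exists_isRadialBump_laplacian_add_nonneg {β : ℝ} (hβ : 0 < β) {f : ℝ → ℝ}
    (hf : ContinuousWithinAt f (Icc 0 β) β) (hnonneg : ∀ u ∈ Icc 0 β, 0 ≤ f u) (hpos : 0 < f β) :
    ∃ v : E → ℝ, IsRadialBump β v ∧ ContDiff ℝ 2 v ∧ ∀ x, 0 ≤ Δ v x + f (v x) := by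
  obtain ⟨c, hc, hcβ⟩ := exists_between hpos
  obtain ⟨a, ⟨ha, hab⟩, hfa⟩ := exists_Icc_forall_lt_of_continuousWithinAt hβ hf hcβ
  obtain ⟨V, hV, hVsmooth, hVsub⟩ := exists_isRadialBump_laplacian_nonneg (E := E) ha hab
  obtain ⟨ρ, hρ, hlower⟩ :=
    exists_forall_neg_le_laplacian_comp_const_smul hVsmooth hV.hasCompactSupport hc
  have hv := hV.comp_const_smul hρ.ne'
  refine ⟨fun x => V (ρ • x), hv, hVsmooth.comp (contDiff_const_smul ρ), fun x => ?_⟩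
  rcases lt_or_ge (V (ρ • x)) a with hlow | hhigh
  · have hlap : 0 ≤ Δ (fun y => V (ρ • y)) x := by
      rw [laplacian_comp_const_smul ρ hVsmooth]
      exact mul_nonneg (sq_nonneg ρ) (hVsub _ hlow)
    exact add_nonneg hlap (hnonneg _ ⟨hv.nonneg x, hv.le x⟩)
  · linarith [hlower x, hfa (V (ρ • x)) ⟨hhigh, hv.le x⟩]

theorem stmt11_general [MeasurableSpace E] [BorelSpace E] (μ : Measure E) [μ.IsAddHaarMeasure]
    {β : ℝ} (hβ : 0 < β) {f : ℝ → ℝ} (hf : ContinuousOn f (Icc 0 β))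
    (hnonneg : ∀ u ∈ Icc 0 β, 0 ≤ f u) (hpos : 0 < f β) :
    ∃ v : E → ℝ, IsRadialBump β v ∧
      ∀ φ : E → ℝ, ContDiff ℝ 2 φ → HasCompactSupport φ → (∀ x, 0 ≤ φ x) →
        0 ≤ (∫ x, v x * Δ φ x ∂μ) + ∫ x, f (v x) * φ x ∂μ := by
  obtain ⟨v, hv, hsmooth, hsub⟩ :=
    exists_isRadialBump_laplacian_add_nonneg (E := E) hβ (hf β (right_mem_Icc.2 hβ.le)) hnonneg hpos
  have hfv : Continuous fun x => f (v x) :=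
    hf.comp_continuous hv.continuous fun x => ⟨hv.nonneg x, hv.le x⟩
  exact ⟨v, hv, fun φ hφ hφs hφ0 =>
    integral_mul_laplacian_add_integral_mul_nonneg hsmooth hfv hsub hφ hφs hφ0⟩

end RadialBumps

/-- Lemma 2.5: existence of a compactly supported radially symmetric
distributional subsolution `v` of `Δv + f₀(v) ≥ 0` with `max v = v(0) = β` for any
`β ∈ (θ₀, 1)`. -/
theorem stmt11 {d : ℕ} (hd1 : 1 ≤ d) (θ₀ : ℝ) (hθ₀ : θ₀ ∈ Ioo (0:ℝ) 1)
    (f₀ : ℝ → ℝ) (hlip : ∃ L : ℝ≥0, LipschitzOnWith L f₀ (Icc 0 1))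
    (hnonneg : ∀ u ∈ Icc (0:ℝ) 1, 0 ≤ f₀ u)
    (hzero : ∀ u ∈ Icc (0:ℝ) θ₀, f₀ u = 0) (hone : f₀ 1 = 0)
    (hpos : ∀ u ∈ Ioo θ₀ 1, 0 < f₀ u) :
    ∀ β ∈ Ioo θ₀ 1, ∃ v : Euc d → ℝ,
      HasCompactSupport v ∧ Continuous v ∧
      (∀ x y : Euc d, ‖x‖ = ‖y‖ → v x = v y) ∧
      (∀ x, 0 ≤ v x) ∧ v 0 = β ∧ (∀ x, v x ≤ β) ∧
      ∀ φ : Euc d → ℝ, ContDiff ℝ (⊤ : ℕ∞) φ → HasCompactSupport φ → (∀ x, 0 ≤ φ x) →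
        0 ≤ (∫ x : Euc d, v x * lap φ x) + ∫ x : Euc d, f₀ (v x) * φ x := by
  rintro β ⟨hθβ, hβ1⟩
  have hsub : Icc 0 β ⊆ Icc 0 1 := Icc_subset_Icc_right hβ1.le
  obtain ⟨v, hv, hweak⟩ := stmt11_general (volume : Measure (Euc d)) (hθ₀.1.trans hθβ)
    (hlip.choose_spec.continuousOn.mono hsub) (fun u hu => hnonneg u (hsub hu)) (hpos β ⟨hθβ, hβ1⟩)
  refine ⟨v, hv.hasCompactSupport, hv.continuous, hv.radial, hv.nonneg, hv.apply_zero, hv.le,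
    fun φ hφ hφs hφ0 => ?_⟩
  have hφ2 : ContDiff ℝ 2 φ := contDiff_infty.1 hφ 2
  rw [lap_eq_laplacian hφ2]
  exact hweak φ hφ2 hφs hφ0
end
end

section
/- Let d ≥ 1, η ∈ (0,1/2], m > 0, M > 0, and α ∈ (0,η]. Let f : ℝ^d × ℝ → ℝ be such that for each x, u ↦ f(x,u) is Lipschitz with constant M, non-increasing on (−∞,2η], and non-increasing on [1−2η,∞). Let u : ℝ×ℝ^d → ℝ be C^{1,2}, solve u_t = Δu + f(x,u) classically on ℝ×ℝ^d, and satisfy ∂_t u ≥ 0 everywhere and ∂_t u(t,x) ≥ m whenever u(t,x) ∈ [η,1−η]. Then: (a) the function v⁺(t,x) := u((1+Mα·m^{−1})t, x) + α is a supersolution: ∂_t v⁺ ≥ Δv⁺ + f(x,v⁺) at every (t,x) ∈ ℝ×ℝ^d; and (b) the function v⁻(t,x) := u((1−Mα·m^{−1})t, x) − α is a subsolution: ∂_t v⁻ ≤ Δv⁻ + f(x,v⁻) at every (t,x) ∈ ℝ×ℝ^d. -/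
open Metric Set Filter
open scoped Topology

noncomputable section

/-!
Where `u` is below `η` or above `1 - η`, the function `f` is non-increasing, so shifting by `α`
only helps. Where `u` is in between, the shift changes `f` by at most `M * α`, which the dilation
compensates because `(M * α / m) * ∂ₜu ≥ M * α` there. Since `∂ₜu ≥ 0`, the dilation never hurts.
-/

section

open scoped NNReal

variable {d : ℕ} {f : Euc d → ℝ → ℝ} {u ut : ℝ → Euc d → ℝ}

/-- Classical supersolutions `v` of `∂ₜv = Δv + f(x, v)` on `ℝ × ℝ^d`, twice continuously
differentiable in space. The time derivative is carried as the separate function `vt`. -/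
structure IsSupersolution (f : Euc d → ℝ → ℝ) (v vt : ℝ → Euc d → ℝ) : Prop where
  contDiff : ∀ t, ContDiff ℝ 2 (v t)
  hasDerivAt : ∀ t x, HasDerivAt (fun s => v s x) (vt t x) t
  lap_add_le : ∀ t x, lap (v t) x + f x (v t x) ≤ vt t x

/-- Classical subsolutions `v` of `∂ₜv = Δv + f(x, v)` on `ℝ × ℝ^d`, with the same conventions as
for `IsSupersolution`. -/
structure IsSubsolution (f : Euc d → ℝ → ℝ) (v vt : ℝ → Euc d → ℝ) : Prop where
  contDiff : ∀ t, ContDiff ℝ 2 (v t)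
  hasDerivAt : ∀ t x, HasDerivAt (fun s => v s x) (vt t x) t
  le_lap_add : ∀ t x, vt t x ≤ lap (v t) x + f x (v t x)

theorem lap_add_const (φ : Euc d → ℝ) (c : ℝ) (x : Euc d) :
    lap (fun z => φ z + c) x = lap φ x := by
  simp only [lap, fderiv_add_const]

theorem lap_sub_const (φ : Euc d → ℝ) (c : ℝ) (x : Euc d) :
    lap (fun z => φ z - c) x = lap φ x := by
  simp only [lap, fderiv_sub_const]

theorem hasDerivAt_comp_const_mul {𝕜 F : Type*} [NontriviallyNormedField 𝕜]
    [NormedAddCommGroup F] [NormedSpace 𝕜 F] {g : 𝕜 → F} {g' : F} {c t : 𝕜}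
    (hg : HasDerivAt g g' (c * t)) : HasDerivAt (fun s => g (c * s)) (c • g') t :=
  hg.scomp t (hasDerivAt_const_mul c)

theorem IsSupersolution.dilate_add_const (hu : IsSupersolution f u ut) {α c : ℝ}
    (hf : ∀ t x, f x (u t x + α) - f x (u t x) ≤ c * ut t x) :
    IsSupersolution f (fun t x => u ((1 + c) * t) x + α)
      (fun t x => (1 + c) * ut ((1 + c) * t) x) where
  contDiff t := (hu.contDiff _).add contDiff_const
  hasDerivAt t x := (hasDerivAt_comp_const_mul (hu.hasDerivAt _ x)).add_const α
  lap_add_le t x := by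
    rw [lap_add_const]
    linarith [hu.lap_add_le ((1 + c) * t) x, hf ((1 + c) * t) x]

theorem IsSubsolution.dilate_sub_const (hu : IsSubsolution f u ut) {α c : ℝ}
    (hf : ∀ t x, f x (u t x) - f x (u t x - α) ≤ c * ut t x) :
    IsSubsolution f (fun t x => u ((1 - c) * t) x - α)
      (fun t x => (1 - c) * ut ((1 - c) * t) x) where
  contDiff t := (hu.contDiff _).sub contDiff_const
  hasDerivAt t x := (hasDerivAt_comp_const_mul (hu.hasDerivAt _ x)).sub_const α
  le_lap_add t x := by
    rw [lap_sub_const]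
    linarith [hu.le_lap_add ((1 - c) * t) x, hf ((1 - c) * t) x]

-- Taking `w = y` bounds forward increments of `g` and `w = z` backward ones.
theorem sub_le_of_lipschitzWith_of_antitoneOn_tails {g : ℝ → ℝ} {K : ℝ≥0} {a b m α p w y z : ℝ}
    (hg : LipschitzWith K g) (hleft : AntitoneOn g (Iic (a + α)))
    (hright : AntitoneOn g (Ici (b - α))) (hm : 0 < m) (hp : 0 ≤ p)
    (hpm : w ∈ Icc a b → m ≤ p) (hyw : y ≤ w) (hwz : w ≤ z) (hzy : z - y ≤ α) :
    g z - g y ≤ K * α / m * p := by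
  have hyz : y ≤ z := hyw.trans hwz
  have hα : 0 ≤ α := (sub_nonneg.2 hyz).trans hzy
  have hgain : 0 ≤ K * α / m * p := by positivity
  rcases lt_or_ge w a with hwa | haw
  · have hz : z ∈ Iic (a + α) := mem_Iic.2 (by linarith)
    exact (sub_nonpos.2 (hleft (hyz.trans hz) hz hyz)).trans hgain
  rcases lt_or_ge b w with hbw | hwb
  · have hy : y ∈ Ici (b - α) := mem_Ici.2 (by linarith)
    exact (sub_nonpos.2 (hright hy (hy.trans hyz) hyz)).trans hgain
  calc
    g z - g y ≤ dist (g z) (g y) := le_abs_self _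
    _ ≤ K * dist z y := hg.dist_le_mul z y
    _ = K * (z - y) := by rw [Real.dist_eq, abs_of_nonneg (sub_nonneg.2 hyz)]
    _ ≤ K * α := by gcongr
    _ = K * α / m * m := (div_mul_cancel₀ _ hm.ne').symm
    _ ≤ K * α / m * p := by gcongr; exact hpm ⟨haw, hwb⟩

theorem stmt16_general {K : ℝ≥0} {a b m α : ℝ} (hm : 0 < m) (hα : 0 ≤ α)
    (hlip : ∀ x, LipschitzWith K (f x))
    (hleft : ∀ x, AntitoneOn (f x) (Iic (a + α)))
    (hright : ∀ x, AntitoneOn (f x) (Ici (b - α)))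
    (hut0 : ∀ t x, 0 ≤ ut t x) (hutm : ∀ t x, u t x ∈ Icc a b → m ≤ ut t x) :
    (IsSupersolution f u ut →
      IsSupersolution f (fun t x => u ((1 + K * α / m) * t) x + α)
        (fun t x => (1 + K * α / m) * ut ((1 + K * α / m) * t) x)) ∧
    (IsSubsolution f u ut →
      IsSubsolution f (fun t x => u ((1 - K * α / m) * t) x - α)
        (fun t x => (1 - K * α / m) * ut ((1 - K * α / m) * t) x)) := by
  have increment_le (t : ℝ) (x : Euc d) {y z : ℝ} :
      y ≤ u t x → u t x ≤ z → z - y ≤ α → f x z - f x y ≤ K * α / m * ut t x :=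
    sub_le_of_lipschitzWith_of_antitoneOn_tails (hlip x) (hleft x) (hright x) hm (hut0 t x)
      (hutm t x)
  exact
    ⟨fun hu => hu.dilate_add_const fun t x =>
      increment_le t x le_rfl (le_add_of_nonneg_right hα) (add_sub_cancel_left _ _).le,
    fun hu => hu.dilate_sub_const fun t x =>
      increment_le t x (sub_le_self _ hα) le_rfl (sub_sub_cancel _ _).le⟩

end

/-- time-dilated super- and subsolutions `v⁺(t,x) = u((1+Mα/m)t,x) + α` and
`v⁻(t,x) = u((1−Mα/m)t,x) − α` built from a solution with time derivative `≥ m` on intermediate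
level sets. -/
theorem stmt16 {d : ℕ} (hd1 : 1 ≤ d) (η m M α : ℝ)
    (hη : η ∈ Ioc (0:ℝ) (1/2)) (hm : 0 < m) (hM : 0 < M) (hα : α ∈ Ioc (0:ℝ) η)
    (f : Euc d → ℝ → ℝ)
    (hlip : ∀ (x : Euc d) (u u' : ℝ), |f x u - f x u'| ≤ M * |u - u'|)
    (hmono1 : ∀ x : Euc d, AntitoneOn (fun u => f x u) (Iic (2*η)))
    (hmono2 : ∀ x : Euc d, AntitoneOn (fun u => f x u) (Ici (1-2*η)))
    (u ut : ℝ → Euc d → ℝ)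
    (hspace : ∀ t : ℝ, ContDiff ℝ 2 (u t))
    (hcont : Continuous fun p : ℝ × Euc d => ut p.1 p.2)
    (hut : ∀ (t : ℝ) (x : Euc d), HasDerivAt (fun s => u s x) (ut t x) t)
    (heq : ∀ (t : ℝ) (x : Euc d), ut t x = lap (u t) x + f x (u t x))
    (hut0 : ∀ (t : ℝ) (x : Euc d), 0 ≤ ut t x)
    (hutm : ∀ (t : ℝ) (x : Euc d), u t x ∈ Icc η (1-η) → m ≤ ut t x) :
    (∀ (t : ℝ) (x : Euc d),
      HasDerivAt (fun s => u ((1 + M*α/m) * s) x + α)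
        ((1 + M*α/m) * ut ((1 + M*α/m) * t) x) t ∧
      lap (fun z => u ((1 + M*α/m) * t) z + α) x + f x (u ((1 + M*α/m) * t) x + α) ≤
        (1 + M*α/m) * ut ((1 + M*α/m) * t) x) ∧
    (∀ (t : ℝ) (x : Euc d),
      HasDerivAt (fun s => u ((1 - M*α/m) * s) x - α)
        ((1 - M*α/m) * ut ((1 - M*α/m) * t) x) t ∧
      (1 - M*α/m) * ut ((1 - M*α/m) * t) x ≤
        lap (fun z => u ((1 - M*α/m) * t) z - α) x + f x (u ((1 - M*α/m) * t) x - α)) := by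
  lift M to NNReal using hM.le
  obtain ⟨hsuper, hsub⟩ := stmt16_general (a := η) (b := 1 - η) hm hα.1.le
    (fun x => .of_dist_le_mul (hlip x))
    (fun x => (hmono1 x).mono (Iic_subset_Iic.2 (by linarith [hα.2])))
    (fun x => (hmono2 x).mono (Ici_subset_Ici.2 (by linarith [hα.2]))) hut0 hutm
  have hv_super := hsuper ⟨hspace, hut, fun t x => (heq t x).ge⟩
  have hv_sub := hsub ⟨hspace, hut, fun t x => (heq t x).le⟩
  exact ⟨fun t x => ⟨hv_super.hasDerivAt t x, hv_super.lap_add_le t x⟩,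
    fun t x => ⟨hv_sub.hasDerivAt t x, hv_sub.le_lap_add t x⟩⟩
end
end
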